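/- arXiv:2009.02477 — 2 statements merged into one kernel-verified Lean document; each statement's English description precedes it below -/
import Mathlib

section
/- Let A be a complex unital Banach algebra, a ∈ A with g-Drazin inverse a^d, and b, c ∈ A with c·a·a^d = c and a^d·(bc) = (bc)·a^d. Then M = [[a,b],[c,0]] has g-Drazin inverse in M₂(A) if and only if bc has g-Drazin inverse in A. -/
open Filter Finset

/-- An element of a complex (Banach) algebra is quasinilpotent if its spectral radius is zero. -/
noncomputable def Quasinilpotent {A : Type*} [Ring A] [Algebra ℂ A] (q : A) : Prop :=
  spectralRadius ℂ q = 0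

/-- `a` has a generalized Drazin inverse: some `b` with `ab = ba`, `b = bab`,
and `a - a²b` quasinilpotent. -/
noncomputable def HasGDrazin {A : Type*} [Ring A] [Algebra ℂ A] (a : A) : Prop :=
  ∃ b : A, a * b = b * a ∧ b = b * a * b ∧ Quasinilpotent (a - a ^ 2 * b)

section
variable {R : Type*} [NormedRing R] [NormedAlgebra ℂ R] [CompleteSpace R]

theorem quasinilpotent_iff_spectrum {R : Type*} [Ring R] [Algebra ℂ R] {q : R} :
    Quasinilpotent q ↔ ∀ k ∈ spectrum ℂ q, k = 0 := by
  simp [Quasinilpotent, spectralRadius]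

theorem quasinilpotent_iff_isUnit {R : Type*} [Ring R] [Algebra ℂ R] {q : R} :
    Quasinilpotent q ↔ ∀ z : ℂ, IsUnit (1 - z • q) := by
  rw [quasinilpotent_iff_spectrum]
  constructor
  · intro h z
    rcases eq_or_ne z 0 with rfl | hz
    · simp
    · by_contra hu
      refine inv_ne_zero hz (h z⁻¹ ?_)
      rw [spectrum.mem_iff]
      intro h'
      apply hu
      have : (1 - z • q) = z • (algebraMap ℂ R z⁻¹ - q) := by
        rw [smul_sub, Algebra.algebraMap_eq_smul_one, smul_smul, mul_inv_cancel₀ hz, one_smul]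
      rw [this]
      exact (isUnit_smul_iff (Units.mk0 z hz) _).2 h'
  · intro h k hk
    by_contra hk0
    rw [spectrum.mem_iff] at hk
    apply hk
    have : algebraMap ℂ R k - q = k • (1 - k⁻¹ • q) := by
      rw [smul_sub, Algebra.algebraMap_eq_smul_one, smul_smul, mul_inv_cancel₀ hk0, one_smul]
    rw [this]
    exact (isUnit_smul_iff (Units.mk0 k hk0) _).2 (h _)

theorem Quasinilpotent.summable {q : R} (hq : Quasinilpotent q) {r : ℝ} (hr : 0 ≤ r) :
    Summable fun n : ℕ => r ^ n * ‖q ^ n‖ := by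
  have h := spectrum.pow_norm_pow_one_div_tendsto_nhds_spectralRadius q
  rw [show spectralRadius ℂ q = 0 from hq] at h
  have hpos : (0 : ENNReal) < ENNReal.ofReal (1 / (2 * (r + 1))) := by
    rw [ENNReal.ofReal_pos]; positivity
  have hev := h.eventually (gt_mem_nhds hpos)
  refine Summable.of_norm_bounded_eventually_nat (g := fun n => (1 / 2 : ℝ) ^ n)
    (summable_geometric_of_lt_one (by norm_num) (by norm_num)) ?_
  filter_upwards [hev, eventually_gt_atTop 0] with n hn hn0
  rw [ENNReal.ofReal_lt_ofReal_iff (by positivity)] at hn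
  have h1 : ‖q ^ n‖ ≤ (1 / (2 * (r + 1))) ^ n := by
    calc ‖q ^ n‖ = (‖q ^ n‖ ^ (1 / n : ℝ)) ^ n := by
          rw [one_div, Real.rpow_inv_natCast_pow (norm_nonneg _) hn0.ne']
      _ ≤ _ := by gcongr
  rw [Real.norm_of_nonneg (by positivity)]
  calc r ^ n * ‖q ^ n‖ ≤ r ^ n * (1 / (2 * (r + 1))) ^ n := by gcongr
    _ = (r / (2 * (r + 1))) ^ n := by rw [← mul_pow, mul_one_div]
    _ ≤ (1 / 2) ^ n := by
        refine pow_le_pow_left₀ (by positivity) ?_ n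
        rw [div_le_div_iff₀ (by positivity) (by positivity)]
        linarith

theorem Quasinilpotent.tendsto {q : R} (hq : Quasinilpotent q) {r : ℝ} (hr : 0 ≤ r) :
    Tendsto (fun n : ℕ => r ^ n * ‖q ^ n‖) atTop (nhds 0) :=
  (hq.summable hr).tendsto_atTop_zero

theorem isUnit_one_sub_of_norm_pow_lt_one {R : Type*} [NormedRing R] [CompleteSpace R]
    {x : R} {n : ℕ} (hx : ‖x ^ n‖ < 1) :
    IsUnit (1 - x) := by
  have h : IsUnit (1 - x ^ n) := isUnit_one_sub_of_norm_lt_one hx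
  rw [← mul_neg_geom_sum] at h
  refine ((Commute.isUnit_mul_iff ?_).1 h).1
  exact Commute.sum_right _ _ _ fun i _ =>
    ((Commute.one_left x).sub_left (Commute.refl x)).pow_right i

theorem Quasinilpotent.mul_left {q r : R} (hq : Quasinilpotent q) (h : Commute r q) :
    Quasinilpotent (r * q) := by
  rw [quasinilpotent_iff_isUnit]
  intro z
  obtain ⟨n, hn⟩ := ((hq.tendsto (norm_nonneg (z • r))).eventually (gt_mem_nhds one_pos)).exists_forall_of_atTop
  refine isUnit_one_sub_of_norm_pow_lt_one (n := n + 1) ?_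
  rw [← smul_mul_assoc, (h.smul_left z).mul_pow]
  calc _ ≤ ‖(z • r) ^ (n + 1)‖ * ‖q ^ (n + 1)‖ := norm_mul_le _ _
    _ ≤ ‖z • r‖ ^ (n + 1) * ‖q ^ (n + 1)‖ := by
      gcongr; exact norm_pow_le' _ (by omega)
    _ < 1 := hn _ (by omega)

theorem Quasinilpotent.mul_right {q r : R} (hq : Quasinilpotent q) (h : Commute q r) :
    Quasinilpotent (q * r) := h.eq ▸ hq.mul_left h.symm

theorem Quasinilpotent.isUnit_one_sub {R : Type*} [Ring R] [Algebra ℂ R] {q : R}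
    (hq : Quasinilpotent q) : IsUnit (1 - q) := by
  simpa using quasinilpotent_iff_isUnit.1 hq 1

theorem one_sub_smul_mul_one_sub_smul {R : Type*} [Ring R] [Algebra ℂ R] {x y : R}
    (h : x * y = 0) (z : ℂ) : (1 - z • x) * (1 - z • y) = 1 - z • (x + y) := by
  simp [mul_sub, sub_mul, h]
  abel

theorem Quasinilpotent.add_of_mul_eq_zero {R : Type*} [Ring R] [Algebra ℂ R] {x y : R}
    (hx : Quasinilpotent x) (hy : Quasinilpotent y) (h : x * y = 0) :
    Quasinilpotent (x + y) := by
  rw [quasinilpotent_iff_isUnit] at *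
  intro z
  rw [← one_sub_smul_mul_one_sub_smul h]
  exact (hx z).mul (hy z)

theorem Quasinilpotent.of_add_of_mul_eq_zero {R : Type*} [Ring R] [Algebra ℂ R] {x y : R}
    (hxy : Quasinilpotent (x + y)) (h : x * y = 0) (h' : y * x = 0) :
    Quasinilpotent x := by
  rw [quasinilpotent_iff_isUnit] at *
  intro z
  have := hxy z
  rw [← one_sub_smul_mul_one_sub_smul h] at this
  refine ((Commute.isUnit_mul_iff ?_).1 this).1
  rw [Commute, SemiconjBy, one_sub_smul_mul_one_sub_smul h, one_sub_smul_mul_one_sub_smul h',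
    add_comm]

theorem eq_zero_of_norm_le_pow_mul_pow {q d x y : R} (hq : Quasinilpotent q)
    (h : ∀ n : ℕ, ‖y‖ ≤ ‖d ^ (n + 1)‖ * ‖x‖ * ‖q ^ (n + 1)‖) : y = 0 := by
  have ht := ((hq.tendsto (norm_nonneg d)).const_mul ‖x‖).comp (tendsto_add_atTop_nat 1)
  rw [mul_zero] at ht
  rw [← norm_le_zero_iff]
  refine ge_of_tendsto' ht fun n => ?_
  calc ‖y‖ ≤ ‖d ^ (n + 1)‖ * ‖x‖ * ‖q ^ (n + 1)‖ := h n
    _ ≤ ‖d‖ ^ (n + 1) * ‖x‖ * ‖q ^ (n + 1)‖ := by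
      gcongr; exact norm_pow_le' _ (by omega)
    _ = _ := by simp only [Function.comp]; ring

end

section

theorem HasGDrazin.add_of_mul_eq_zero {R : Type*} [Ring R] [Algebra ℂ R] {x y : R}
    (hx : HasGDrazin x) (hy : HasGDrazin y) (h : x * y = 0) (h' : y * x = 0) :
    HasGDrazin (x + y) := by
  obtain ⟨s, hs1, hs2, hs3⟩ := hx
  obtain ⟨t, ht1, ht2, ht3⟩ := hy
  have hs2' : s = s * s * x := by rw [mul_assoc, ← hs1, ← mul_assoc]; exact hs2
  have hs2'' : s = x * s * s := by rw [hs1]; exact hs2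
  have ht2' : t = t * t * y := by rw [mul_assoc, ← ht1, ← mul_assoc]; exact ht2
  have ht2'' : t = y * t * t := by rw [ht1]; exact ht2
  have sy : s * y = 0 := by rw [hs2', mul_assoc, h, mul_zero]
  have ys : y * s = 0 := by rw [hs2'', ← mul_assoc, ← mul_assoc, h', zero_mul, zero_mul]
  have tx : t * x = 0 := by rw [ht2', mul_assoc, h', mul_zero]
  have xt : x * t = 0 := by rw [ht2'', ← mul_assoc, ← mul_assoc, h, zero_mul, zero_mul]
  have st : s * t = 0 := by rw [hs2', mul_assoc, xt, mul_zero]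
  have ts : t * s = 0 := by rw [ht2', mul_assoc, ys, mul_zero]
  refine ⟨s + t, ?_, ?_, ?_⟩
  · simp only [mul_add, add_mul, sy, ys, tx, xt, hs1, ht1]
  · have : (s + t) * (x + y) * (s + t) = s * x * s + t * y * t := by
      simp only [mul_add, add_mul, sy, tx, add_zero, zero_add, mul_assoc, xt, ys, mul_zero]
    rw [this, ← hs2, ← ht2]
  · have : x + y - (x + y) ^ 2 * (s + t) = (x - x ^ 2 * s) + (y - y ^ 2 * t) := by
      simp only [pow_two, mul_add, add_mul, h, h', add_zero, zero_add, mul_assoc, xt, ys,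
        mul_zero]
      abel
    rw [this]
    refine hs3.add_of_mul_eq_zero ht3 ?_
    simp only [pow_two, mul_sub, sub_mul, mul_assoc, h]
    rw [← mul_assoc x y, h, ← mul_assoc s y, sy]
    simp

theorem quasinilpotent_mul_comm {R : Type*} [Ring R] [Algebra ℂ R] {x y : R}
    (h : Quasinilpotent (x * y)) : Quasinilpotent (y * x) := by
  rw [quasinilpotent_iff_spectrum] at *
  intro k hk
  by_contra hk0
  have hmem : k ∈ spectrum ℂ (y * x) \ {0} := ⟨hk, hk0⟩
  rw [spectrum.nonzero_mul_comm] at hmem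
  exact hk0 (h k hmem.1)

/-- The Cline formula: g-Drazin invertibility of a product does not depend on its order. -/
theorem HasGDrazin.mul_comm {R : Type*} [Ring R] [Algebra ℂ R] {x y : R}
    (h : HasGDrazin (x * y)) : HasGDrazin (y * x) := by
  obtain ⟨d, h1, h2, h3⟩ := h
  have h2' : d * d * (x * y) = d := by rw [mul_assoc, ← h1, ← mul_assoc]; exact h2.symm
  have h2'' : x * y * (d * d) = d := by rw [← mul_assoc, h1]; exact h2.symm
  refine ⟨y * (d * d) * x, ?_, ?_, ?_⟩
  · calc y * x * (y * (d * d) * x) = y * (x * y * (d * d)) * x := by simp only [mul_assoc]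
      _ = y * (d * d * (x * y)) * x := by rw [h2', h2'']
      _ = _ := by simp only [mul_assoc]
  · calc y * (d * d) * x = y * (d * (d * (x * y) * d)) * x := by rw [← h2]
      _ = y * ((d * d * (x * y)) * d) * x := by simp only [mul_assoc]
      _ = y * ((d * d * (x * y)) * (x * y * (d * d))) * x := by rw [h2'']
      _ = _ := by simp only [mul_assoc]
  · have e : y * x - (y * x) ^ 2 * (y * (d * d) * x) = y * ((1 - x * y * d) * x) := by
      calc _ = y * x - y * (x * y * (x * y * (d * d))) * x := by simp only [pow_two, mul_assoc]
        _ = _ := by rw [h2'']; simp only [mul_sub, sub_mul, one_mul, mul_assoc]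
    rw [e]
    refine quasinilpotent_mul_comm ?_
    have : (1 - x * y * d) * x * y = x * y - (x * y) ^ 2 * d := by
      calc _ = x * y - x * y * (d * (x * y)) := by simp only [sub_mul, one_mul, mul_assoc]
        _ = _ := by rw [← h1, pow_two]; simp only [mul_assoc]
    rwa [this]

variable {R : Type*} [NormedRing R] [NormedAlgebra ℂ R] [CompleteSpace R]

/-- A g-Drazin inverse of `a` lies in the bicommutant of `a`. -/
theorem commute_of_gDrazin {a d y : R} (h1 : a * d = d * a) (h2 : d = d * a * d)
    (h3 : Quasinilpotent (a - a ^ 2 * d)) (hy : Commute y a) : Commute y d := by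
  have had : Commute a d := h1
  obtain ⟨e, he⟩ : ∃ e, e = d * a := ⟨_, rfl⟩
  have hee : e * e = e := by rw [he, ← mul_assoc, ← h2]
  have hae : Commute a e := he ▸ had.mul_right (Commute.refl a)
  have hq : a - a ^ 2 * d = a * (1 - e) := by
    rw [he, ← h1, mul_sub, mul_one, pow_two, mul_assoc]
  have hqn : ∀ n : ℕ, (a - a ^ 2 * d) ^ (n + 1) = a ^ (n + 1) * (1 - e) := by
    intro n
    have hid : IsIdempotentElem (1 - e) := IsIdempotentElem.one_sub hee
    rw [hq, ((Commute.one_right a).sub_right hae).mul_pow, hid.pow_succ_eq]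
  have hen : ∀ n : ℕ, d ^ (n + 1) * a ^ (n + 1) = e := by
    intro n
    rw [← had.symm.mul_pow, ← he]
    exact IsIdempotentElem.pow_succ_eq n hee
  have hz : e * y * (1 - e) = 0 := by
    refine eq_zero_of_norm_le_pow_mul_pow (d := d) (x := y) h3 fun n => ?_
    have : e * y * (1 - e) = d ^ (n + 1) * y * (a - a ^ 2 * d) ^ (n + 1) := by
      rw [hqn, mul_assoc (d ^ _), ← mul_assoc y, (hy.pow_right (n + 1)).eq, ← hen n]
      simp only [mul_assoc]
    rw [this]
    exact norm_mul₃_le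
  have hz' : (1 - e) * y * e = 0 := by
    refine eq_zero_of_norm_le_pow_mul_pow (d := d) (x := y) h3 fun n => ?_
    have hcomm : Commute (a ^ (n + 1)) (1 - e) :=
      ((Commute.one_right a).sub_right hae).pow_left _
    have : (1 - e) * y * e = (a - a ^ 2 * d) ^ (n + 1) * y * d ^ (n + 1) := by
      rw [hqn, hcomm.eq, mul_assoc (1 - e) _ y, ← (hy.pow_right (n + 1)).eq, mul_assoc (1 - e) _ (d ^ _),
        mul_assoc y, (had.pow_pow _ _).eq, hen n, mul_assoc]
    rw [this]
    exact norm_mul₃_le.trans_eq (by ring)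
  have hey : e * y = y * e := by
    have e1 : e * y = e * y * e := by
      rw [mul_sub, mul_one, sub_eq_zero] at hz; exact hz
    have e2 : y * e = e * y * e := by
      rw [sub_mul, one_mul, sub_mul, sub_eq_zero] at hz'; exact hz'
    rw [e1, ← e2]
  have hde : d * e = d := by rw [he, ← h1, ← mul_assoc]; exact h2.symm
  have hed : e * d = d := by rw [he]; exact h2.symm
  change y * d = d * y
  calc y * d = y * e * d := by rw [mul_assoc, hed]
    _ = d * (a * y) * d := by rw [← hey, he]; simp only [mul_assoc]
    _ = d * (y * e) := by rw [← hy.eq, he, ← h1]; simp only [mul_assoc]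
    _ = d * y := by rw [← hey, ← mul_assoc, hde]

/-- Adding a quasinilpotent element orthogonal to `x` does not affect g-Drazin invertibility. -/
theorem hasGDrazin_add_iff {x n : R} (hn : Quasinilpotent n) (h : x * n = 0) (h' : n * x = 0) :
    HasGDrazin (x + n) ↔ HasGDrazin x := by
  constructor
  · rintro ⟨d, h1, h2, h3⟩
    set m := x + n with hm
    have hmn : m * n = n * n := by rw [hm, add_mul, h, zero_add]
    have hnm : n * m = n * n := by rw [hm, mul_add, h', zero_add]
    have hcomm : Commute n d := commute_of_gDrazin h1 h2 h3 (hnm.trans hmn.symm)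
    have hpow : ∀ k : ℕ, d * n = d ^ (k + 1) * n ^ (k + 1) := by
      intro k
      induction k with
      | zero => simp
      | succ k ih =>
        have e1 : d * d * m = d := by rw [mul_assoc, ← h1, ← mul_assoc]; exact h2.symm
        calc d * n = d ^ k * d * n ^ (k + 1) := by rw [ih, pow_succ d]
          _ = d ^ k * (d * d * m) * n ^ (k + 1) := by rw [e1]
          _ = d ^ k * d * d * (m * n) * n ^ k := by rw [pow_succ' n]; simp only [mul_assoc]
          _ = _ := by rw [hmn, pow_succ' n (k + 1), pow_succ' n k, pow_succ d, pow_succ d]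
                      simp only [mul_assoc]
    have hdn : d * n = 0 := by
      refine eq_zero_of_norm_le_pow_mul_pow (d := d) (x := 1) hn fun k => ?_
      rw [hpow k]
      simpa using norm_mul₃_le (a := d ^ (k + 1)) (b := (1 : R)) (c := n ^ (k + 1))
    have hnd : n * d = 0 := hcomm.eq.trans hdn
    have hx : x = m - n := by rw [hm, add_sub_cancel_right]
    refine ⟨d, ?_, ?_, ?_⟩
    · rw [hx, sub_mul, mul_sub, hnd, hdn, h1]
    · rw [hx, mul_sub, hdn, sub_zero]; exact h2
    · have e : x ^ 2 * d = m ^ 2 * d := by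
        rw [hx]
        simp only [pow_two, mul_assoc, sub_mul, hnd, sub_zero]
        rw [h1, ← mul_assoc n, hnd, zero_mul, sub_zero]
      rw [e]
      have e2 : m - m ^ 2 * d = (x - m ^ 2 * d) + n := by rw [hm]; abel
      refine Quasinilpotent.of_add_of_mul_eq_zero (y := n) (e2 ▸ h3) ?_ ?_
      · rw [sub_mul, h, mul_assoc, hdn, mul_zero, sub_zero]
      · rw [mul_sub, h', pow_two, mul_assoc, h1, ← mul_assoc m, h1, ← mul_assoc, ← mul_assoc, hnd]
        simp
  · intro hx
    refine hx.add_of_mul_eq_zero ⟨0, by simp, by simp, by simpa using hn⟩ h h'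

end

section

/-- A commuting set lies in a commutative subalgebra that contains its whole bicommutant. -/
theorem exists_commRing_bicommutant {R : Type*} [Ring R] [Algebra ℂ R] (S : Set R)
    (hS : ∀ x ∈ S, ∀ y ∈ S, Commute x y) :
    ∃ (B : Subalgebra ℂ R), (∀ x ∈ B, ∀ y ∈ B, x * y = y * x) ∧
      ∀ x, x ∈ B ↔ ∀ y, (∀ s ∈ S, Commute y s) → Commute y x := by
  have hmem : ∀ x, x ∈ Subalgebra.centralizer ℂ (Set.centralizer S) ↔
      ∀ y, (∀ s ∈ S, Commute y s) → Commute y x := by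
    intro x
    rw [Subalgebra.mem_centralizer_iff]
    exact ⟨fun h y hy => h y fun s hs => (hy s hs).eq.symm,
      fun h y hy => h y fun s hs => (hy s hs).symm⟩
  refine ⟨_, fun x hx y hy => ?_, hmem⟩
  rw [hmem] at hx hy
  exact hy x fun s hs => (hx s fun t ht => hS s hs t ht).symm

variable {R : Type*} [NormedRing R] [NormedAlgebra ℂ R] [CompleteSpace R]

theorem catalan_le_four_pow (n : ℕ) : catalan n ≤ 4 ^ n := by
  rw [catalan_eq_centralBinom_div]
  refine (Nat.div_le_self _ _).trans ?_
  rw [Nat.centralBinom, show 4 ^ n = 2 ^ (2 * n) by rw [pow_mul]; norm_num]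
  exact Nat.choose_le_two_pow _ _

/-- The equation `u - u ^ 2 = q` has a quasinilpotent solution, the generating function of the
Catalan numbers evaluated at `q`. -/
theorem Quasinilpotent.exists_sub_sq_eq {q : R} (hq : Quasinilpotent q) :
    ∃ u : R, u - u ^ 2 = q ∧ Quasinilpotent u ∧ ∀ y, Commute y q → Commute y u := by
  have hs : Summable fun n : ℕ => ‖(catalan n : R) * q ^ n‖ := by
    refine Summable.of_nonneg_of_le (fun _ => norm_nonneg _) (fun n => ?_)
      (hq.summable (r := 4) (by norm_num))
    rw [← nsmul_eq_mul]
    refine (norm_nsmul_le).trans ?_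
    gcongr
    exact_mod_cast catalan_le_four_pow n
  set C : R := ∑' n : ℕ, (catalan n : R) * q ^ n with hC
  have hcomm : ∀ y, Commute y q → Commute y C := fun y hy =>
    Commute.tsum_right y fun n => (Nat.cast_commute _ y).symm.mul_right (hy.pow_right n)
  have hqC : Commute q C := hcomm q (Commute.refl q)
  have hCC : C * C = ∑' n : ℕ, (catalan (n + 1) : R) * q ^ n := by
    rw [hC, tsum_mul_tsum_eq_tsum_sum_antidiagonal_of_summable_norm hs hs]
    refine tsum_congr fun n => ?_
    rw [catalan_succ', Nat.cast_sum, Finset.sum_mul]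
    refine Finset.sum_congr rfl fun kl hkl => ?_
    rw [← Finset.HasAntidiagonal.mem_antidiagonal.1 hkl, pow_add, Nat.cast_mul, mul_assoc, mul_assoc,
      ← mul_assoc (q ^ _), ← (Nat.cast_commute _ (q ^ kl.1)).eq, mul_assoc]
  have hrec : C = 1 + q * (C * C) := by
    have hs' : Summable fun n : ℕ => (catalan (n + 1) : R) * q ^ n := by
      refine Summable.of_norm_bounded ((hq.summable (r := 4) (by norm_num)).mul_left 4)
        fun n => ?_
      rw [← nsmul_eq_mul, ← mul_assoc, ← pow_succ']
      refine norm_nsmul_le.trans ?_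
      gcongr
      exact_mod_cast catalan_le_four_pow (n + 1)
    rw [hCC, ← hs'.tsum_mul_left, hC, hs.of_norm.tsum_eq_zero_add]
    congr 1
    · simp
    · refine tsum_congr fun n => ?_
      rw [pow_succ', ← mul_assoc, ← mul_assoc, (Nat.cast_commute _ q).eq]
  refine ⟨q * C, ?_, hq.mul_right hqC, fun y hy => hy.mul_right (hcomm y hy)⟩
  have : (q * C) ^ 2 = q * (q * (C * C)) := by
    rw [pow_two, mul_assoc, ← mul_assoc C, ← hqC.eq]; simp only [mul_assoc]
  rw [this, ← mul_sub]
  nth_rewrite 1 [hrec]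
  simp

end

section

variable {R : Type*} [NormedRing R] [NormedAlgebra ℂ R] [CompleteSpace R]

theorem Quasinilpotent.of_mul_self_eq_zero {R : Type*} [Ring R] [Algebra ℂ R] {x : R}
    (h : x * x = 0) : Quasinilpotent x := by
  rw [quasinilpotent_iff_isUnit]
  intro z
  refine IsNilpotent.isUnit_one_sub ⟨2, ?_⟩
  rw [smul_pow, pow_two x, h, smul_zero]

/-- The algebraic identities giving the g-Drazin inverse of a root of a quadratic equation whose
constant coefficient is factored through `u`. -/
theorem quadratic_root_identities {C : Type*} [CommRing C] {α ad t v u k l : C}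
    (h1 : ad * α * α = α) (h2 : ad * α * ad = ad) (ht : t * t = α * t + v)
    (hv : ad * α * v = v) (hu : u - u ^ 2 = -(ad * ad * v)) (hk : (1 - 2 * u) * k = 1)
    (hl : (1 - u) * l = 1) :
    ∃ X g p : C, X = X * t * X ∧ t - t ^ 2 * X = g * u + t * p ∧ g * u * (t * p) = 0 ∧
      t * p * (t * p) = 0 := by
  have hpu : ad * α * u = u := by
    have hu' : u = -(ad * ad * v) * l := by linear_combination -u * hl + l * hu
    linear_combination (ad * α - 1) * hu' - l * ad * ad * hv
  have hroot : (t - α * u) * (t - (α - α * u)) = 0 := by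
    linear_combination ht + α ^ 2 * hu - (ad * α + 1) * hv
  have hg : t * ((t - α * u) * (ad * k)) = (α - α * u) * ((t - α * u) * (ad * k)) := by
    linear_combination ad * k * hroot
  have hX : t * (ad * l * ((t - α * u) * (ad * k))) = (t - α * u) * (ad * k) := by
    have : ad * l * (α - α * u) * ((t - α * u) * (ad * k)) = (t - α * u) * (ad * k) := by
      linear_combination (t - α * u) * k * h2 * (1 - u) * l + (t - α * u) * (ad * k) * hl
    linear_combination ad * l * hg + this
  have hG : (t - α * u) * (ad * k) * ((t - α * u) * (ad * k)) = (t - α * u) * (ad * k) := by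
    linear_combination (ad * k) ^ 2 * hroot + (t - α * u) * (k ^ 2 * (1 - 2 * u) * h2 +
      ad * k * hk)
  refine ⟨ad * l * ((t - α * u) * (ad * k)), α * (1 - (t - α * u) * (ad * k)), 1 - ad * α,
    ?_, ?_, ?_, ?_⟩
  · linear_combination (-(ad * l * ((t - α * u) * (ad * k)))) * hX - ad * l * hG
  · linear_combination (-t) * hX - ad * k * hroot - (t - α * u) * α * ad * hk + u * h1
  · linear_combination (-(1 - (t - α * u) * (ad * k)) * u * t) * h1
  · linear_combination (1 - ad * α) ^ 2 * ht - t * (1 - ad * α) * h1 - (1 - ad * α) * hv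

/-- A root `t` of a monic quadratic polynomial with commuting coefficients is g-Drazin invertible
if the linear coefficient is group invertible and dominates the quasinilpotent constant one. -/
theorem hasGDrazin_of_quadratic_of_quasinilpotent {α ad t v : R}
    (hcomm : ∀ x ∈ ({α, ad, t, v} : Set R), ∀ y ∈ ({α, ad, t, v} : Set R), Commute x y)
    (h1 : ad * α * α = α) (h2 : ad * α * ad = ad) (ht : t * t = α * t + v)
    (hv : ad * α * v = v) (hq : Quasinilpotent v) : HasGDrazin t := by
  obtain ⟨B, hB, hmem⟩ := exists_commRing_bicommutant _ hcomm
  let _ : CommRing B := { (inferInstance : Ring B) with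
    mul_comm := fun x y => Subtype.ext (hB x x.2 y y.2) }
  have hsub : ∀ x ∈ ({α, ad, t, v} : Set R), x ∈ B := fun x hx => (hmem x).2 fun y hy => hy x hx
  lift α to B using hsub _ (by simp)
  lift ad to B using hsub _ (by simp)
  lift t to B using hsub _ (by simp)
  lift v to B using hsub _ (by simp)
  have hadv : Quasinilpotent (-(ad * ad * v : B) : R) := by
    have := hq.mul_left (r := ((-(ad * ad) : B) : R)) (hB _ (Subtype.prop _) _ (Subtype.prop _))
    convert this using 1
    push_cast
    rw [neg_mul]
  obtain ⟨u, hu, hqu, hcu⟩ := hadv.exists_sub_sq_eq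
  have huB : u ∈ B := (hmem u).2 fun y hy => hcu y <| by
    exact (hmem _).1 (Subtype.prop (-(ad * ad * v))) y hy
  lift u to B using huB
  have hinv : ∀ x : B, IsUnit (x : R) → ∃ y : B, x * y = 1 := by
    rintro x ⟨w, hw⟩
    refine ⟨⟨(↑w⁻¹ : R), (hmem _).2 fun y hy => ?_⟩, Subtype.ext ?_⟩
    · exact Commute.units_inv_right (hw ▸ (hmem _).1 x.2 y hy)
    · simp [← hw]
  obtain ⟨k, hk⟩ := hinv (1 - (u + u)) (by
    simpa [two_smul] using quasinilpotent_iff_isUnit.1 hqu 2)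
  obtain ⟨l, hl⟩ := hinv (1 - u) hqu.isUnit_one_sub
  obtain ⟨X, g, p, e1, e2, e3, e4⟩ := quadratic_root_identities (α := α) (ad := ad) (t := t)
    (v := v) (u := u) (k := k) (l := l) (Subtype.ext h1) (Subtype.ext h2) (Subtype.ext ht)
    (Subtype.ext hv) (Subtype.ext hu) (by linear_combination hk) hl
  refine ⟨X, hB _ t.2 _ X.2, congrArg Subtype.val e1, ?_⟩
  have e2' : (t : R) - t ^ 2 * X = g * u + t * p := congrArg Subtype.val e2
  rw [e2']
  exact (hqu.mul_left (hB _ g.2 _ u.2)).add_of_mul_eq_zero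
    (.of_mul_self_eq_zero (congrArg Subtype.val e4)) (congrArg Subtype.val e3)

/-- A root of a monic quadratic polynomial with commuting coefficients is g-Drazin invertible if
the constant coefficient is and the linear one is group invertible and dominates it. -/
theorem HasGDrazin.of_quadratic {α ad t w : R}
    (hcomm : ∀ x ∈ ({α, ad, t, w} : Set R), ∀ y ∈ ({α, ad, t, w} : Set R), Commute x y)
    (h1 : ad * α * α = α) (h2 : ad * α * ad = ad) (ht : t * t = α * t + w)
    (hw : ad * α * w = w) (hd : HasGDrazin w) : HasGDrazin t := by
  obtain ⟨d, d1, d2, d3⟩ := hd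
  obtain ⟨B, hB, hmem⟩ := exists_commRing_bicommutant _ hcomm
  let _ : CommRing B := { (inferInstance : Ring B) with
    mul_comm := fun x y => Subtype.ext (hB x x.2 y y.2) }
  have hsub : ∀ x ∈ ({α, ad, t, w} : Set R), x ∈ B := fun x hx => (hmem x).2 fun y hy => hy x hx
  have hdB : d ∈ B := (hmem d).2 fun y hy => commute_of_gDrazin d1 d2 d3 (hy w (by simp))
  lift α to B using hsub _ (by simp)
  lift ad to B using hsub _ (by simp)
  lift t to B using hsub _ (by simp)
  lift w to B using hsub _ (by simp)
  lift d to B using hdB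
  have ht' : t * t = α * t + w := Subtype.ext ht
  have hw' : ad * α * w = w := Subtype.ext hw
  have d2' : d = d * w * d := Subtype.ext d2
  have hinvertible : HasGDrazin ((t * (w * d) : B) : R) := by
    refine ⟨((t - α) * d : B), hB _ (Subtype.prop _) _ (Subtype.prop _), ?_, ?_⟩
    · have : (t - α) * d = (t - α) * d * (t * (w * d)) * ((t - α) * d) := by
        linear_combination (t - α) * (1 + w * d) * d2' - (t - α) * w * d ^ 3 * ht'
      exact congrArg Subtype.val this
    · have : t * (w * d) - (t * (w * d)) ^ 2 * ((t - α) * d) = 0 := by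
        linear_combination t * w * (1 + w * d) * d2' - t * w ^ 2 * d ^ 3 * ht'
      have h0 := congrArg (Subtype.val : B → R) this
      refine .of_mul_self_eq_zero ?_
      have h0' : ((t * (w * d) : B) : R) - ((t * (w * d) : B) : R) ^ 2 * ((t - α) * d : B) = 0 :=
        h0
      rw [h0', zero_mul]
  have hquasi : HasGDrazin ((t * (1 - w * d) : B) : R) := by
    refine hasGDrazin_of_quadratic_of_quasinilpotent (α := (α : R)) (ad := (ad : R))
      (v := (w * (1 - w * d) : B)) ?_ h1 h2 ?_ ?_ ?_
    · have : ∀ x ∈ ({(α : R), (ad : R), ((t * (1 - w * d) : B) : R),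
          ((w * (1 - w * d) : B) : R)} : Set R), x ∈ B := by
        simp only [Set.mem_insert_iff, Set.mem_singleton_iff]
        rintro x (rfl | rfl | rfl | rfl) <;> exact Subtype.prop _
      exact fun x hx y hy => hB x (this x hx) y (this y hy)
    · refine congrArg (Subtype.val : B → R) (?_ :
        t * (1 - w * d) * (t * (1 - w * d)) = α * (t * (1 - w * d)) + w * (1 - w * d))
      linear_combination (1 - w * d) ^ 2 * ht' - (α * t + w) * w * d2'
    · refine congrArg (Subtype.val : B → R) (?_ :
        ad * α * (w * (1 - w * d)) = w * (1 - w * d))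
      linear_combination (1 - w * d) * hw'
    · convert d3 using 1
      refine congrArg (Subtype.val : B → R) (?_ : w * (1 - w * d) = w - w ^ 2 * d)
      ring
  have hsum := hinvertible.add_of_mul_eq_zero hquasi
    (congrArg (Subtype.val : B → R) (?_ : t * (w * d) * (t * (1 - w * d)) = 0))
    (congrArg (Subtype.val : B → R) (?_ : t * (1 - w * d) * (t * (w * d)) = 0))
  · convert hsum using 1
    refine congrArg (Subtype.val : B → R) (?_ : t = t * (w * d) + t * (1 - w * d))
    ring
  · linear_combination t ^ 2 * w * d2'
  · linear_combination t ^ 2 * w * d2'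

end

section

/-- If `X` is an outer inverse of `T`, then `det T - det T ^ 2 * det X` inherits the invertibility
of `1 - z • ·` from `T - T ^ 2 * X`. -/
theorem isUnit_one_sub_mul_of_det {B : Type*} [CommRing B] {T X : Matrix (Fin 2) (Fin 2) B}
    (h2 : X = X * T * X) (z : B)
    (hu : IsUnit (1 - Matrix.scalar (Fin 2) (z * (1 - T.det * X.det)) * T.adjugate *
      (T - T ^ 2 * X))) :
    IsUnit (1 - z * (T.det - T.det ^ 2 * X.det)) := by
  have hdet : X.det = X.det * T.det * X.det := by
    conv_lhs => rw [h2, Matrix.det_mul, Matrix.det_mul]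
  obtain ⟨G, hG⟩ : ∃ G, G = 1 - T * X := ⟨_, rfl⟩
  obtain ⟨μ, hμ⟩ : ∃ μ, μ = z * (T.det - T.det ^ 2 * X.det) := ⟨_, rfl⟩
  have hmat : 1 - Matrix.scalar (Fin 2) (z * (1 - T.det * X.det)) * T.adjugate *
      (T - T ^ 2 * X) = 1 - μ • G := by
    have : T - T ^ 2 * X = T * G := by rw [hG, mul_sub, mul_one, pow_two, mul_assoc]
    rw [this, mul_assoc, ← mul_assoc T.adjugate, Matrix.adjugate_mul, hμ, Matrix.scalar_apply,
      ← Matrix.smul_one_eq_diagonal, smul_mul_assoc, smul_mul_assoc, one_mul, one_mul, smul_smul]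
    congr 2
    ring
  have hGdet : (1 - G).det = T.det * X.det := by rw [hG, sub_sub_cancel, Matrix.det_mul]
  rw [hmat, Matrix.isUnit_iff_isUnit_det] at hu
  have hfac : (1 - μ • G).det =
      (1 - μ) * (T.det * X.det + G.trace - (1 + μ) * G.det) := by
    rw [Matrix.det_fin_two] at hGdet ⊢
    rw [Matrix.det_fin_two G, Matrix.trace_fin_two]
    simp at hGdet ⊢
    linear_combination hGdet + z * T.det ^ 2 * hdet + T.det * X.det * hμ
  rw [hfac] at hu
  rw [← hμ]
  exact isUnit_of_mul_isUnit_left hu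

attribute [local instance] Matrix.linftyOpNormedRing Matrix.linftyOpNormedAlgebra

variable {A : Type*} [NormedRing A] [NormedAlgebra ℂ A] [CompleteSpace A]

theorem completeSpace_matrix {A : Type*} [NormedRing A] [CompleteSpace A] :
    @CompleteSpace (Matrix (Fin 2) (Fin 2) A) PseudoMetricSpace.toUniformSpace :=
  inferInstanceAs (CompleteSpace (Fin 2 → Fin 2 → A))

attribute [local instance] completeSpace_matrix

theorem HasGDrazin.of_companion {α w : A} (hcomm : Commute α w)
    (h : HasGDrazin (!![α, w; 1, 0] : Matrix (Fin 2) (Fin 2) A)) : HasGDrazin w := by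
  obtain ⟨X, h1, h2, h3⟩ := h
  obtain ⟨B, hB, hmem⟩ := exists_commRing_bicommutant ({α, w} : Set A) (by
    simp [hcomm, hcomm.symm])
  let _ : CommRing B := { (inferInstance : Ring B) with
    mul_comm := fun x y => Subtype.ext (hB x x.2 y y.2) }
  let F : Matrix (Fin 2) (Fin 2) B →ₐ[ℂ] Matrix (Fin 2) (Fin 2) A := B.val.mapMatrix
  have hF : Function.Injective F := fun M N h => by
    ext i j
    exact congrFun (congrFun h i) j
  have hlift : ∀ M : Matrix (Fin 2) (Fin 2) A,
      (∀ y, (∀ s ∈ ({α, w} : Set A), Commute y s) → Commute (Matrix.scalar (Fin 2) y) M) →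
      ∃ N, F N = M := by
    intro M hM
    refine ⟨Matrix.of fun i j => ⟨M i j, (hmem _).2 fun y hy => ?_⟩, rfl⟩
    have := congrFun (congrFun (hM y hy).eq i) j
    simpa [Matrix.diagonal_mul, Matrix.mul_diagonal, commute_iff_eq] using this
  have hscalar : ∀ (M : Matrix (Fin 2) (Fin 2) B) (y : A),
      (∀ s ∈ ({α, w} : Set A), Commute y s) → Commute (Matrix.scalar (Fin 2) y) (F M) := by
    intro M y hy
    change _ * _ = _ * _
    ext i j
    simpa [Matrix.diagonal_mul, Matrix.mul_diagonal, F] using ((hmem _).1 (M i j).2 y hy).eq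
  have hunit : ∀ M : Matrix (Fin 2) (Fin 2) B, IsUnit (F M) → IsUnit M := by
    rintro M ⟨v, hv⟩
    obtain ⟨N, hN⟩ := hlift ↑v⁻¹ fun y hy =>
      Commute.units_inv_right (hv ▸ hscalar M y hy)
    refine IsUnit.of_mul_eq_one N (hF ?_)
    rw [map_mul, map_one, hN, ← hv, Units.mul_inv]
  have hsub : ∀ x ∈ ({α, w} : Set A), x ∈ B := fun x hx => (hmem x).2 fun y hy => hy x hx
  lift α to B using hsub _ (by simp)
  lift w to B using hsub _ (by simp)
  obtain ⟨T, hT⟩ : ∃ T : Matrix (Fin 2) (Fin 2) B, T = !![α, w; 1, 0] := ⟨_, rfl⟩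
  have hFT : F T = !![(α : A), (w : A); 1, 0] := by
    rw [hT]
    ext i j
    fin_cases i <;> fin_cases j <;> rfl
  rw [← hFT] at h1 h2 h3
  obtain ⟨X, rfl⟩ := hlift X fun y hy => commute_of_gDrazin h1 h2 h3 (hscalar T y hy)
  have h1' : T * X = X * T := hF (by simpa using h1)
  have h2' : X = X * T * X := hF (by simpa using h2)
  have h3' : Quasinilpotent (F (T - T ^ 2 * X)) := by simpa using h3
  have hadj : T.adjugate = Matrix.scalar (Fin 2) α - T := by
    rw [hT, Matrix.adjugate_fin_two_of]
    ext i j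
    fin_cases i <;> fin_cases j <;> simp
  have hcT : Commute T (T - T ^ 2 * X) :=
    (Commute.refl T).sub_right (((Commute.refl T).pow_right 2).mul_right h1')
  have hqn : ∀ z : B, IsUnit (1 - z * (T.det - T.det ^ 2 * X.det)) := by
    intro z
    refine isUnit_one_sub_mul_of_det h2' z (hunit _ ?_)
    rw [map_sub, map_one, map_mul]
    refine (h3'.mul_left ?_).isUnit_one_sub
    refine Commute.map (Commute.mul_left (Matrix.scalar_commute _ (Commute.all _) _) ?_) F
    rw [hadj]
    exact (Matrix.scalar_commute _ (Commute.all _) _).sub_left hcT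
  have hTdet : T.det = -w := by rw [hT, Matrix.det_fin_two_of]; ring
  have hdet : X.det = X.det * T.det * X.det := by
    conv_lhs => rw [h2', Matrix.det_mul, Matrix.det_mul]
  refine ⟨((-X.det : B) : A), hB _ w.2 _ (Subtype.prop _), ?_, ?_⟩
  · refine congrArg (Subtype.val : B → A) (?_ : -X.det = -X.det * w * -X.det)
    rw [hTdet] at hdet
    linear_combination -hdet
  · rw [quasinilpotent_iff_isUnit]
    intro z
    have := (hqn (-algebraMap ℂ B z)).map B.val
    convert this using 1
    rw [hTdet]
    simp [Algebra.smul_def, mul_add, mul_sub]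

theorem HasGDrazin.companion {α ad w : A} (hcomm : Commute α w) (hα : Commute α ad)
    (had : Commute ad w) (h1 : ad * α * α = α) (h2 : ad * α * ad = ad) (hw : ad * α * w = w)
    (h : HasGDrazin w) : HasGDrazin (!![α, w; 1, 0] : Matrix (Fin 2) (Fin 2) A) := by
  have hs : ∀ x y : A, Commute x y →
      Commute (Matrix.scalar (Fin 2) x) (Matrix.scalar (Fin 2) y) :=
    fun x y h => h.map (Matrix.scalar (Fin 2))
  have ht : ∀ x : A, Commute x α → Commute x w →
      Commute (Matrix.scalar (Fin 2) x) (!![α, w; 1, 0] : Matrix (Fin 2) (Fin 2) A) := by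
    intro x hx hx'
    change _ * _ = _ * _
    ext i j
    fin_cases i <;> fin_cases j <;> simp [Matrix.diagonal_mul, Matrix.mul_diagonal, hx.eq, hx'.eq]
  refine HasGDrazin.of_quadratic (α := Matrix.scalar (Fin 2) α) (ad := Matrix.scalar (Fin 2) ad)
    (w := Matrix.scalar (Fin 2) w) ?_ ?_ ?_ ?_ ?_ ?_
  · have c1 := hs _ _ hcomm
    have c2 := hs _ _ hα
    have c3 := hs _ _ had
    have c4 := ht α (Commute.refl _) hcomm
    have c5 := ht ad hα.symm had
    have c6 := ht w hcomm.symm (Commute.refl _)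
    simp only [Set.mem_insert_iff, Set.mem_singleton_iff]
    rintro x (rfl | rfl | rfl | rfl) y (rfl | rfl | rfl | rfl) <;>
      first | exact Commute.refl _ | assumption | (apply Commute.symm; assumption)
  · rw [← map_mul, ← map_mul, h1]
  · rw [← map_mul, ← map_mul, h2]
  · ext i j
    fin_cases i <;> fin_cases j <;>
      simp [Matrix.mul_apply, Fin.sum_univ_two]
  · rw [← map_mul, ← map_mul, hw]
  · obtain ⟨d, d1, d2, d3⟩ := h
    refine ⟨Matrix.scalar (Fin 2) d, ?_, ?_, ?_⟩
    · rw [← map_mul, ← map_mul, d1]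
    · rw [← map_mul, ← map_mul, ← d2]
    · rw [quasinilpotent_iff_isUnit] at d3 ⊢
      intro z
      convert (d3 z).map (Matrix.scalar (Fin 2)) using 1
      rw [map_sub, map_one, ← map_pow, ← map_mul, ← map_sub]
      congr 1
      ext i j
      fin_cases i <;> fin_cases j <;> simp

theorem quasinilpotent_matrix_row {A : Type*} [Ring A] [Algebra ℂ A] {x y : A} (hx : Quasinilpotent x) :
    Quasinilpotent (!![x, y; 0, 0] : Matrix (Fin 2) (Fin 2) A) := by
  rw [quasinilpotent_iff_isUnit] at hx ⊢
  intro z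
  obtain ⟨v, hv⟩ := hx z
  have e : (1 : Matrix (Fin 2) (Fin 2) A) - z • !![x, y; 0, 0] = !![(v : A), -(z • y); 0, 1] := by
    rw [hv]
    ext i j
    fin_cases i <;> fin_cases j <;> simp
  rw [e]
  refine ⟨⟨_, !![(↑v⁻¹ : A), ↑v⁻¹ * (z • y); 0, 1], ?_, ?_⟩, rfl⟩ <;>
  · ext i j
    fin_cases i <;> fin_cases j <;> simp [Matrix.mul_apply, Fin.sum_univ_two]

theorem hasGDrazin_matrix_add_iff {x n : Matrix (Fin 2) (Fin 2) A} (hn : Quasinilpotent n)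
    (h : x * n = 0) (h' : n * x = 0) : HasGDrazin (x + n) ↔ HasGDrazin x :=
  hasGDrazin_add_iff hn h h'

end

theorem stmt15 {A : Type*} [NormedRing A] [NormedAlgebra ℂ A] [CompleteSpace A]
    (a b c ad : A) (h1 : a * ad = ad * a) (h2 : ad = ad * a * ad)
    (h3 : Quasinilpotent (a - a ^ 2 * ad))
    (hc : c * a * ad = c) (hcm : ad * (b * c) = (b * c) * ad) :
    HasGDrazin (!![a, b; c, 0] : Matrix (Fin 2) (Fin 2) A) ↔ HasGDrazin (b * c) := by
  obtain ⟨p, hp⟩ : ∃ p, p = ad * a := ⟨_, rfl⟩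
  have hpad : p * ad = ad := hp ▸ h2.symm
  have hadp : ad * p = ad := by rw [hp, ← h1, ← mul_assoc]; exact h2.symm
  have hpp : p * p = p := by nth_rewrite 2 [hp]; rw [← mul_assoc, hpad, hp]
  have hap : a * p = p * a := by rw [hp, ← mul_assoc, h1]
  have hcp : c * p = c := by rw [hp, ← h1, ← mul_assoc, hc]
  have hwp : b * c * p = b * c := by rw [mul_assoc, hcp]
  -- `p` is a left identity for `b * c`, as `ad` commutes with `b * c`
  have hpw : p * (b * c) = b * c := by
    have : b * c = ad * (b * c) * a := by
      rw [hcm, mul_assoc, ← hp, hwp]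
    rw [this, ← mul_assoc, ← mul_assoc, hpad]
  have hαad : p * a * ad = p := by rw [mul_assoc, h1, ← hp, hpp]
  have hadα : ad * (p * a) = p := by rw [← mul_assoc, hadp, hp]
  have hcomm : Commute (p * a) (b * c) := by
    calc p * a * (b * c) = p * a * (b * c * p) := by rw [hwp]
      _ = p * a * (b * c * ad) * (p * a) := by
        rw [mul_assoc (p * a) (b * c * ad), mul_assoc (b * c) ad, hadα]
      _ = b * c * (p * a) := by
        rw [← hcm, ← mul_assoc (p * a), hαad, hpw]
  have hN : Quasinilpotent (!![(1 - p) * a, (1 - p) * b; 0, 0] : Matrix (Fin 2) (Fin 2) A) := by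
    refine quasinilpotent_matrix_row ?_
    have : (1 - p) * a = a - a ^ 2 * ad := by
      rw [sub_mul, one_mul, ← hap, hp, ← h1, pow_two, mul_assoc]
    rwa [this]
  have hsplit : (!![a, b; c, 0] : Matrix (Fin 2) (Fin 2) A) =
      !![p * a, p * b; c, 0] + !![(1 - p) * a, (1 - p) * b; 0, 0] := by
    ext i j
    fin_cases i <;> fin_cases j <;> simp [sub_mul]
  have hpq : p * (1 - p) = 0 := by rw [mul_sub, mul_one, hpp, sub_self]
  have hqp : (1 - p) * p = 0 := by rw [sub_mul, one_mul, hpp, sub_self]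
  have hPN : (!![p * a, p * b; c, 0] : Matrix (Fin 2) (Fin 2) A) *
      !![(1 - p) * a, (1 - p) * b; 0, 0] = 0 := by
    have e1 : p * a * (1 - p) = 0 := by rw [← hap, mul_assoc, hpq, mul_zero]
    have e2 : c * (1 - p) = 0 := by rw [mul_sub, mul_one, hcp, sub_self]
    ext i j
    fin_cases i <;> fin_cases j <;>
      simp only [Fin.zero_eta, Fin.mk_one, Matrix.mul_apply, Fin.sum_univ_two, Matrix.of_apply,
        Matrix.cons_val', Matrix.cons_val_zero, Matrix.cons_val_one, Matrix.cons_val_fin_one,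
        ← mul_assoc, e1, e2, zero_mul, mul_zero, add_zero, Matrix.zero_apply]
  have hNP : (!![(1 - p) * a, (1 - p) * b; 0, 0] : Matrix (Fin 2) (Fin 2) A) *
      !![p * a, p * b; c, 0] = 0 := by
    have e1 : (1 - p) * a * p = 0 := by rw [mul_assoc, hap, ← mul_assoc, hqp, zero_mul]
    have e2 : (1 - p) * b * c = 0 := by rw [mul_assoc, sub_mul, one_mul, hpw, sub_self]
    ext i j
    fin_cases i <;> fin_cases j <;>
      simp only [Fin.zero_eta, Fin.mk_one, Matrix.mul_apply, Fin.sum_univ_two, Matrix.of_apply,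
        Matrix.cons_val', Matrix.cons_val_zero, Matrix.cons_val_one, Matrix.cons_val_fin_one,
        ← mul_assoc, e1, e2, zero_mul, mul_zero, add_zero, Matrix.zero_apply]
  rw [hsplit, hasGDrazin_matrix_add_iff hN hPN hNP]
  have hfac : (!![p * a, p * b; c, 0] : Matrix (Fin 2) (Fin 2) A) =
      !![1, 0; 0, c] * !![p * a, p * b; 1, 0] := by
    ext i j
    fin_cases i <;> fin_cases j <;> simp [Matrix.mul_apply, Fin.sum_univ_two]
  have hfac' : (!![p * a, b * c; 1, 0] : Matrix (Fin 2) (Fin 2) A) =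
      !![p * a, p * b; 1, 0] * !![1, 0; 0, c] := by
    rw [← hpw]
    ext i j
    fin_cases i <;> fin_cases j <;> simp [Matrix.mul_apply, Fin.sum_univ_two, mul_assoc]
  constructor
  · intro h
    rw [hfac] at h
    exact HasGDrazin.of_companion hcomm (hfac' ▸ h.mul_comm)
  · intro h
    rw [hfac]
    refine HasGDrazin.mul_comm (hfac' ▸ HasGDrazin.companion hcomm (hαad.trans hadα.symm) hcm
      ?_ ?_ ?_ h)
    · rw [hadα, ← mul_assoc, hpp]
    · rw [hadα, hpad]
    · rw [hadα, hpw]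
end

section
/- Let A be a complex unital Banach algebra, a ∈ A with g-Drazin inverse a^d, and b, c ∈ A with a^π·(bc) = 0 and a·(bc) = (bc)·a, where a^π = 1 − a·a^d. Then M = [[a,b],[c,0]] has g-Drazin inverse in M₂(A) if and only if bc has g-Drazin inverse in A. -/
open Filter Finset

theorem quasinilpotent_iff {R : Type*} [Ring R] [Algebra ℂ R] {q : R} :
    Quasinilpotent q ↔ ∀ z ∈ spectrum ℂ q, z = 0 := by
  simp [Quasinilpotent, spectralRadius]

theorem Quasinilpotent.map {R S : Type*} [Ring R] [Algebra ℂ R] [Ring S] [Algebra ℂ S]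
    (φ : R →ₐ[ℂ] S) {q : R} (hq : Quasinilpotent q) : Quasinilpotent (φ q) :=
  quasinilpotent_iff.2 fun z hz =>
    quasinilpotent_iff.1 hq z (AlgHom.spectrum_apply_subset φ q hz)

theorem HasGDrazin.map {R S : Type*} [Ring R] [Algebra ℂ R] [Ring S] [Algebra ℂ S]
    (φ : R →ₐ[ℂ] S) {u : R} (hu : HasGDrazin u) : HasGDrazin (φ u) := by
  obtain ⟨d, hc, hd, hq⟩ := hu
  refine ⟨φ d, ?_, ?_, ?_⟩
  · rw [← map_mul, hc, map_mul]
  · rw [← map_mul, ← map_mul, ← hd]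
  · simpa using hq.map φ

theorem HasGDrazin.neg {R : Type*} [Ring R] [Algebra ℂ R] {u : R} (hu : HasGDrazin u) :
    HasGDrazin (-u) := by
  obtain ⟨d, hc, hd, hq⟩ := hu
  refine ⟨-d, by simpa using hc, by simpa using hd, ?_⟩
  rw [show -u - (-u) ^ 2 * -d = -(u - u ^ 2 * d) by noncomm_ring, quasinilpotent_iff,
    ← spectrum.neg_eq]
  intro z hz
  exact neg_eq_zero.1 (quasinilpotent_iff.1 hq _ hz)

section BanachAlgebra

variable {A : Type*} [NormedRing A] [NormedAlgebra ℂ A] [CompleteSpace A]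

theorem Quasinilpotent.summable_pow_mul_norm_pow {q : A} (hq : Quasinilpotent q)
    {r : ℝ} (hr : 0 ≤ r) : Summable fun n : ℕ => r ^ n * ‖q ^ n‖ := by
  have hlim := spectrum.pow_norm_pow_one_div_tendsto_nhds_spectralRadius q
  rw [show spectralRadius ℂ q = 0 from hq] at hlim
  set ε : ℝ := 1 / (2 * (r + 1)) with hε
  have hε0 : 0 < ε := by positivity
  have hev : ∀ᶠ n : ℕ in atTop, ‖q ^ n‖ ≤ ε ^ n := by
    filter_upwards [hlim.eventually (gt_mem_nhds (ENNReal.ofReal_pos.2 hε0)),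
      eventually_gt_atTop 0] with n hn hn0
    have hlt := (ENNReal.ofReal_lt_ofReal_iff hε0).1 hn
    calc ‖q ^ n‖ = (‖q ^ n‖ ^ (1 / n : ℝ)) ^ n := by
          rw [one_div, Real.rpow_inv_natCast_pow (norm_nonneg _) hn0.ne']
      _ ≤ ε ^ n := by gcongr
  have hrε : r * ε ≤ 1 / 2 := by
    rw [hε, mul_one_div, div_le_div_iff₀ (by positivity) (by positivity)]
    linarith
  refine Summable.of_norm_bounded_eventually_nat (g := fun n => (1 / 2 : ℝ) ^ n)
    summable_geometric_two ?_
  filter_upwards [hev] with n hn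
  rw [Real.norm_of_nonneg (by positivity)]
  calc r ^ n * ‖q ^ n‖ ≤ r ^ n * ε ^ n := by gcongr
    _ = (r * ε) ^ n := (mul_pow _ _ _).symm
    _ ≤ (1 / 2) ^ n := by gcongr

theorem Quasinilpotent.eq_zero_of_norm_le {q z : A} (hq : Quasinilpotent q) {r : ℝ}
    (hr : 0 ≤ r) (h : ∀ n : ℕ, 0 < n → ‖z‖ ≤ ‖z‖ * (r ^ n * ‖q ^ n‖)) : z = 0 := by
  have hlim := (hq.summable_pow_mul_norm_pow hr).tendsto_atTop_zero.const_mul ‖z‖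
  rw [mul_zero] at hlim
  exact norm_le_zero_iff.1 (ge_of_tendsto hlim ((eventually_gt_atTop 0).mono h))

theorem eq_zero_of_eq_mul_mul_quasinilpotent {d z q : A} (hq : Quasinilpotent q)
    (h : z = d * z * q) : z = 0 := by
  have hpow : ∀ n : ℕ, z = d ^ n * z * q ^ n := by
    intro n
    induction n with
    | zero => simp
    | succ n ih =>
      rw [pow_succ, pow_succ', show d ^ n * d * z * (q * q ^ n) = d ^ n * (d * z * q) * q ^ n by
        noncomm_ring, ← h]
      exact ih
  refine hq.eq_zero_of_norm_le (norm_nonneg d) fun n hn => ?_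
  calc ‖z‖ = ‖d ^ n * z * q ^ n‖ := by rw [← hpow n]
    _ ≤ ‖d‖ ^ n * ‖z‖ * ‖q ^ n‖ := by
      refine (norm_mul_le _ _).trans ?_
      gcongr
      refine (norm_mul_le _ _).trans ?_
      gcongr
      exact norm_pow_le' d hn
    _ = _ := by ring

theorem eq_zero_of_eq_quasinilpotent_mul_mul {d z q : A} (hq : Quasinilpotent q)
    (h : z = q * z * d) : z = 0 := by
  have hpow : ∀ n : ℕ, z = q ^ n * z * d ^ n := by
    intro n
    induction n with
    | zero => simp
    | succ n ih =>
      rw [pow_succ, pow_succ', show q ^ n * q * z * (d * d ^ n) = q ^ n * (q * z * d) * d ^ n by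
        noncomm_ring, ← h]
      exact ih
  refine hq.eq_zero_of_norm_le (norm_nonneg d) fun n hn => ?_
  calc ‖z‖ = ‖q ^ n * z * d ^ n‖ := by rw [← hpow n]
    _ ≤ ‖q ^ n‖ * ‖z‖ * ‖d‖ ^ n := by
      refine (norm_mul_le _ _).trans ?_
      gcongr
      · exact norm_mul_le _ _
      · exact norm_pow_le' d hn
    _ = _ := by ring

/-- The g-Drazin inverse lies in the double commutant. -/
theorem commute_gDrazin_of_commute {a d y : A} (hc : a * d = d * a) (hd : d = d * a * d)
    (hq : Quasinilpotent (a - a ^ 2 * d)) (hy : Commute y a) : Commute y d := by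
  have hy' : y * a = a * y := hy
  have hae : a * (a * d) = a * d * a := by rw [mul_assoc, ← hc]
  have hde : d * (a * d) = d := by rw [← mul_assoc, ← hd]
  have hed : a * d * d = d := by rw [hc, ← hd]
  have hee : a * d * (a * d) = a * d := by rw [mul_assoc, hde]
  have hqr : (1 - a * d) * (a - a ^ 2 * d) = a * (1 - a * d) := by
    have : a * d * (a - a ^ 2 * d) = 0 := by
      rw [show a * d * (a - a ^ 2 * d) = a * d * a - a * d * a * (a * d) by noncomm_ring, ← hae,
        mul_assoc a, hee, sub_self]
    rw [sub_mul, this]; noncomm_ring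
  have hql : (a - a ^ 2 * d) * (1 - a * d) = a * (1 - a * d) := by
    rw [show (a - a ^ 2 * d) * (1 - a * d) = a - a * (a * d) - a * (a * d - a * d * (a * d)) by
      noncomm_ring, hee]
    noncomm_ring
  have h₁ : a * d * y * (1 - a * d) = 0 := by
    apply eq_zero_of_eq_mul_mul_quasinilpotent (d := d) hq
    symm
    calc d * (a * d * y * (1 - a * d)) * (a - a ^ 2 * d)
        = d * (a * d) * y * ((1 - a * d) * (a - a ^ 2 * d)) := by noncomm_ring
      _ = d * (y * a) * (1 - a * d) := by rw [hqr, hde]; noncomm_ring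
      _ = a * d * y * (1 - a * d) := by rw [hy', hc]; noncomm_ring
  have h₂ : (1 - a * d) * y * (a * d) = 0 := by
    apply eq_zero_of_eq_quasinilpotent_mul_mul (d := d) hq
    symm
    calc (a - a ^ 2 * d) * ((1 - a * d) * y * (a * d)) * d
        = ((a - a ^ 2 * d) * (1 - a * d)) * y * (a * d * d) := by noncomm_ring
      _ = (a - a * (a * d)) * y * d := by rw [hql, hed]; noncomm_ring
      _ = (1 - a * d) * (a * y) * d := by rw [hae]; noncomm_ring
      _ = (1 - a * d) * y * (a * d) := by rw [← hy']; noncomm_ring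
  have h₃ : a * d * y = y * (a * d) := by
    have h₁' : a * d * y = a * d * y * (a * d) := by
      rw [mul_sub, mul_one, sub_eq_zero] at h₁; exact h₁
    have h₂' : y * (a * d) = a * d * y * (a * d) := by
      rw [sub_mul, one_mul, sub_mul, sub_eq_zero] at h₂; exact h₂
    rw [h₁', ← h₂']
  show y * d = d * y
  calc y * d = y * (a * d) * d := by rw [mul_assoc, hed]
    _ = d * (a * y) * d := by rw [← h₃, hc]; noncomm_ring
    _ = d * (y * (a * d)) := by rw [← hy']; noncomm_ring
    _ = d * (a * d) * y := by rw [← h₃]; noncomm_ring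
    _ = d * y := by rw [hde]

end BanachAlgebra

section Commutative

variable {B : Type*} [NormedCommRing B] [NormedAlgebra ℂ B] [CompleteSpace B]

theorem isUnit_iff_forall_algHom {u : B} : IsUnit u ↔ ∀ χ : B →ₐ[ℂ] ℂ, χ u ≠ 0 := by
  refine ⟨fun hu χ => (hu.map χ).ne_zero, fun h => ?_⟩
  by_contra hu
  obtain ⟨f, hf⟩ := WeakDual.CharacterSpace.exists_apply_eq_zero hu
  exact h (WeakDual.CharacterSpace.toAlgHom f) hf

theorem quasinilpotent_iff_forall_algHom {q : B} :
    Quasinilpotent q ↔ ∀ χ : B →ₐ[ℂ] ℂ, χ q = 0 := by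
  rw [quasinilpotent_iff]
  refine ⟨fun h χ => h _ (AlgHom.apply_mem_spectrum χ q), fun h z hz => ?_⟩
  obtain ⟨f, rfl⟩ := WeakDual.CharacterSpace.mem_spectrum_iff_exists.1 hz
  exact h (WeakDual.CharacterSpace.toAlgHom f)

theorem quasinilpotent_matrix_fin_two_iff {X : Matrix (Fin 2) (Fin 2) B} :
    Quasinilpotent X ↔ ∀ χ : B →ₐ[ℂ] ℂ, χ X.trace = 0 ∧ χ X.det = 0 := by
  have hunit : ∀ z : ℂ, z ∉ spectrum ℂ X ↔
      ∀ χ : B →ₐ[ℂ] ℂ, z ^ 2 - z * χ X.trace + χ X.det ≠ 0 := by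
    intro z
    rw [spectrum.notMem_iff, Matrix.isUnit_iff_isUnit_det, isUnit_iff_forall_algHom]
    refine forall_congr' fun χ => ?_
    have : χ (algebraMap ℂ (Matrix (Fin 2) (Fin 2) B) z - X).det =
        z ^ 2 - z * χ X.trace + χ X.det := by
      simp [Matrix.det_fin_two, Matrix.trace_fin_two, Matrix.algebraMap_matrix_apply]
      ring
    rw [this]
  rw [quasinilpotent_iff]
  constructor
  · intro h χ
    have hne : ∀ z : ℂ, z ^ 2 - z * χ X.trace + χ X.det = 0 → z = 0 := fun z hz =>
      h z (by_contra fun hz' => (hunit z).1 hz' χ hz)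
    have hdet : χ X.det = 0 := by
      obtain ⟨r, hr⟩ := IsAlgClosed.exists_eq_mul_self (discrim 1 (-χ X.trace) (χ X.det))
      obtain ⟨z, hz⟩ := exists_quadratic_eq_zero one_ne_zero ⟨r, hr⟩
      obtain rfl : z = 0 := hne z (by linear_combination hz)
      simpa using hz
    exact ⟨hne _ (by rw [hdet]; ring), hdet⟩
  · intro h z hz
    by_contra hz0
    refine (hunit z).2 (fun χ => ?_) hz
    simpa [h χ] using hz0

/-- Over a commutative Banach algebra, the g-Drazin inverse of `det N` is `det Nᵈ`. -/
theorem HasGDrazin.det_fin_two {N : Matrix (Fin 2) (Fin 2) B} (h : HasGDrazin N) :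
    HasGDrazin N.det := by
  obtain ⟨D, hc, hd, hq⟩ := h
  refine ⟨D.det, _root_.mul_comm _ _, by rw [← Matrix.det_mul, ← Matrix.det_mul, ← hd], ?_⟩
  rw [quasinilpotent_iff_forall_algHom]
  intro χ
  by_cases hN : χ N.det = 0
  · simp [hN]
  obtain ⟨htr, hdet⟩ := quasinilpotent_matrix_fin_two_iff.1 hq χ
  set X := N - N ^ 2 * D with hX
  have hX2 : (χ.mapMatrix X) ^ 2 = 0 := by
    rw [Matrix.trace_fin_two, map_add] at htr
    rw [Matrix.det_fin_two, map_sub, map_mul, map_mul] at hdet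
    rw [pow_two]
    ext i j
    fin_cases i <;> fin_cases j <;> simp [Matrix.mul_apply, Fin.sum_univ_two]
    all_goals grind
  have hP : (1 - N * D) ^ 2 = 1 - N * D := by
    have : N * D * (N * D) = N * D := by
      rw [mul_assoc, ← mul_assoc D, ← hd]
    rw [pow_two, sub_mul, mul_sub, mul_sub, this]; simp
  have hXsq : X ^ 2 = N ^ 2 * (1 - N * D) := by
    have hcomm : Commute N (1 - N * D) :=
      (Commute.one_right N).sub_right ((Commute.refl N).mul_right hc)
    rw [hX, show N - N ^ 2 * D = N * (1 - N * D) by noncomm_ring, hcomm.mul_pow, hP]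
  have hunit : IsUnit (χ.mapMatrix N ^ 2) := by
    refine IsUnit.pow 2 ((Matrix.isUnit_iff_isUnit_det _).2 ?_)
    rw [← AlgHom.map_det]
    exact isUnit_iff_ne_zero.2 hN
  have hone : χ.mapMatrix (N * D) = 1 := by
    rw [← map_pow, hXsq, map_mul, map_pow, hunit.mul_right_eq_zero, map_sub, map_one,
      sub_eq_zero] at hX2
    exact hX2.symm
  have hdone : χ N.det * χ D.det = 1 := by
    rw [← map_mul, ← Matrix.det_mul, AlgHom.map_det, hone, Matrix.det_one]
  rw [map_sub, map_mul, map_pow, pow_two, mul_assoc, hdone, mul_one, sub_self]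

/-- The Catalan generating function solves `C = 1 + s C²` at a quasinilpotent `s`. -/
theorem Quasinilpotent.exists_eq_one_add_mul_sq {s : B} (hs : Quasinilpotent s) :
    ∃ C : B, C = 1 + s * C ^ 2 := by
  have hsum : Summable fun n : ℕ => ‖(catalan n : B) * s ^ n‖ := by
    refine Summable.of_nonneg_of_le (fun n => norm_nonneg _) (fun n => ?_)
      (hs.summable_pow_mul_norm_pow (r := 4) (by norm_num))
    rw [← nsmul_eq_mul]
    refine norm_nsmul_le.trans ?_
    gcongr
    have hle : catalan n ≤ 4 ^ n := by
      refine le_trans ?_ (Nat.centralBinom_le_four_pow n)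
      rw [catalan_eq_centralBinom_div]
      exact Nat.div_le_self _ _
    exact_mod_cast hle
  refine ⟨∑' n : ℕ, (catalan n : B) * s ^ n, ?_⟩
  have hterm : ∀ n : ℕ, ∑ p ∈ HasAntidiagonal.antidiagonal n,
      (catalan p.1 : B) * s ^ p.1 * ((catalan p.2 : B) * s ^ p.2) =
        (catalan (n + 1) : B) * s ^ n := by
    intro n
    rw [catalan_succ', Nat.cast_sum, Finset.sum_mul]
    refine Finset.sum_congr rfl fun p hp => ?_
    rw [← HasAntidiagonal.mem_antidiagonal.1 hp, Nat.cast_mul, pow_add]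
    ring
  have hsq : (∑' n : ℕ, (catalan n : B) * s ^ n) ^ 2 =
      ∑' n : ℕ, (catalan (n + 1) : B) * s ^ n := by
    rw [pow_two, tsum_mul_tsum_eq_tsum_sum_antidiagonal_of_summable_norm hsum hsum]
    exact tsum_congr hterm
  have hs1 : Summable fun n : ℕ => (catalan (n + 1) : B) * s ^ n :=
    (summable_norm_sum_mul_antidiagonal_of_summable_norm hsum hsum).of_norm.congr hterm
  rw [hsq, hsum.of_norm.tsum_eq_zero_add, ← hs1.tsum_mul_left]
  simp only [catalan_zero, Nat.cast_one, pow_zero, mul_one]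
  congr 1
  exact tsum_congr fun n => by ring

theorem matrix_fin_two_congr {R : Type*} {a b c d a' b' c' d' : R} (ha : a = a') (hb : b = b')
    (hc : c = c') (hd : d = d') : !![a, b; c, d] = !![a', b'; c', d'] := by
  rw [ha, hb, hc, hd]

/-- The g-Drazin inverse is `αN + γ`; on the corner where `w` is quasinilpotent and `a` invertible
the small root of `z² - az - w` is given by the Catalan generating function. -/
theorem hasGDrazin_companion {a d w : B} (hd : d = d * a * d)
    (hq : Quasinilpotent (a - a ^ 2 * d)) (hw : (1 - a * d) * w = 0) (h : HasGDrazin w) :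
    HasGDrazin (!![a, w; 1, 0] : Matrix (Fin 2) (Fin 2) B) := by
  obtain ⟨x, -, hx, hwq⟩ := h
  rw [quasinilpotent_iff_forall_algHom] at hq hwq
  set t := d ^ 2 * (w - w ^ 2 * x) with ht
  have htχ : ∀ χ : B →ₐ[ℂ] ℂ, χ t = 0 := fun χ => by rw [ht, map_mul, hwq, mul_zero]
  obtain ⟨C, hC⟩ := Quasinilpotent.exists_eq_one_add_mul_sq (s := -t)
    (quasinilpotent_iff_forall_algHom.2 fun χ => by rw [map_neg, htχ, neg_zero])
  have hunit : IsUnit (1 + 2 * t * C) := isUnit_iff_forall_algHom.2 fun χ => by simp [htχ]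
  obtain ⟨v, hv⟩ := hunit.exists_left_inv
  have hCv : C = v * (1 + t * C ^ 2) := by
    linear_combination (-C) * hv + v * hC
  set g := a * d - w * x with hg
  have hdw : d * a * w = w := by linear_combination -hw
  have hgg : g * g = g := by
    rw [hg]
    linear_combination (-a) * hd - w * hx - 2 * x * hdw
  have hwg : w * g = w - w ^ 2 * x := by rw [hg]; linear_combination hdw
  have htg : t * g = t := by
    rw [ht, mul_assoc, ← hwg, mul_assoc w, hgg]
  have htx : t * x = 0 := by rw [ht]; linear_combination d ^ 2 * w * hx
  have hfg : w * x * g = 0 := by rw [hg]; linear_combination x * hdw + w * hx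
  set p := g * d * v with hp
  set q := w * x + t * C * v with hqd
  set α := x + g * d ^ 2 * C * v with hα
  set γ := -(x * a) + d * t * C ^ 2 * v with hγ
  have hpα : p = α * a + γ := by
    rw [hp, hα, hγ]
    linear_combination (-(g * d * v)) * hC + g * v * C * hd + d * v * C ^ 2 * htg
  have hqα : q = α * w := by
    rw [hqd, hα]
    linear_combination C * v * ht - C * v * d ^ 2 * hwg
  have hα' : α = p * p + q * α := by
    rw [hp, hqd, hα]
    linear_combination hx - d ^ 2 * v ^ 2 * hgg - d ^ 2 * C * v * hfg - C * v * htx +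
      d ^ 2 * v * g * hCv
  have hγ' : γ = q * (p + γ) := by
    rw [hp, hqd, hγ]
    linear_combination (-a) * hx - d * v * hfg - w * d * C ^ 2 * v * htx - C * v ^ 2 * d * htg +
      C * v * a * htx + d * t * C * v * hCv
  have hND : (!![a, w; 1, 0] : Matrix (Fin 2) (Fin 2) B) * !![p, q; α, γ] =
      !![p * a + q, p * w; p, q] := by
    rw [Matrix.mul_fin_two]
    refine matrix_fin_two_congr ?_ ?_ ?_ ?_
    · linear_combination -hqα
    · linear_combination a * hqα - w * hpα
    · ring
    · ring
  have hDN : (!![p, q; α, γ] : Matrix (Fin 2) (Fin 2) B) * !![a, w; 1, 0] =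
      !![p * a + q, p * w; p, q] := by
    rw [Matrix.mul_fin_two]
    refine matrix_fin_two_congr ?_ ?_ ?_ ?_
    · ring
    · ring
    · linear_combination -hpα
    · linear_combination -hqα
  refine ⟨!![p, q; α, γ], hND.trans hDN.symm, ?_, ?_⟩
  · rw [hDN, Matrix.mul_fin_two]
    refine matrix_fin_two_congr ?_ ?_ hα' ?_
    · linear_combination hpα + a * hα' + hγ' - q * hpα + p * hqα
    · linear_combination hqα + w * hα' - q * hqα - p * a * hqα + p * w * hpα
    · linear_combination hγ'
  · have hmat : (!![a, w; 1, 0] : Matrix (Fin 2) (Fin 2) B) -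
        !![a, w; 1, 0] ^ 2 * !![p, q; α, γ] =
        !![a - (a * (p * a + q) + w * p), w - (a * (p * w) + w * q);
          1 - (p * a + q), -(p * w)] := by
      rw [pow_two, mul_assoc, hND, Matrix.mul_fin_two]
      ext i j
      fin_cases i <;> fin_cases j <;> simp
    have hid : a - a ^ 2 * (g * d) - a * (w * x) = a - a ^ 2 * d := by
      rw [hg]
      linear_combination a ^ 2 * hd + a * x * hdw
    rw [hmat, quasinilpotent_matrix_fin_two_iff]
    intro χ
    have hvχ : χ v = 1 := by
      have := congrArg χ hv
      simpa [htχ χ] using this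
    have hpχ : χ p = χ (g * d) := by rw [hp, map_mul, hvχ, mul_one]
    have hqχ : χ q = χ (w * x) := by rw [hqd, map_add]; simp [htχ χ]
    have hpw : χ p * χ w = 0 := by
      rw [← map_mul, show p * w = d * v * (w * g) by rw [hp]; ring, hwg, map_mul, hwq, mul_zero]
    have hwχ : χ w - χ w * χ q = 0 := by
      have := hwq χ
      rw [hqχ, map_mul]
      rw [map_sub, map_mul, map_pow] at this
      linear_combination this
    have haχ : χ a - χ a ^ 2 * χ p - χ a * χ q = 0 := by
      have := congrArg χ hid
      rw [hq] at this
      rw [hpχ, hqχ, ← this]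
      simp
    constructor
    · simp only [Matrix.trace_fin_two_of, map_add, map_sub, map_mul, map_neg]
      linear_combination haχ - 2 * hpw
    · simp only [Matrix.det_fin_two_of, map_add, map_sub, map_mul, map_neg, map_one]
      linear_combination (-(χ a - (χ a * (χ p * χ a + χ q) + χ w * χ p)) +
        χ a * (1 - (χ p * χ a + χ q))) * hpw - (1 - (χ p * χ a + χ q)) * hwχ

end Commutative

section Transfer

theorem Quasinilpotent.of_map_of_range_eq_commutant {R S : Type*} [Ring R] [Algebra ℂ R]
    [Ring S] [Algebra ℂ S] (φ : R →ₐ[ℂ] S) (hφ : Function.Injective φ) {T : Set S}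
    (hT : ∀ z, (∃ r, φ r = z) ↔ ∀ y ∈ T, Commute y z) {q : R} (hq : Quasinilpotent (φ q)) :
    Quasinilpotent q := by
  rw [quasinilpotent_iff] at hq ⊢
  intro z hz
  refine hq z fun hunit => hz ?_
  obtain ⟨U, hU⟩ := hunit
  have hUφ : (U : S) = φ (algebraMap ℂ R z - q) := by rw [hU]; simp
  obtain ⟨r, hr⟩ := (hT (↑U⁻¹ : S)).2 fun y hy =>
    Commute.units_inv_right (by rw [hUφ]; exact (hT _).1 ⟨_, rfl⟩ y hy)
  refine ⟨⟨_, r, hφ ?_, hφ ?_⟩, rfl⟩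
  · rw [map_mul, ← hUφ, hr, U.mul_inv, map_one]
  · rw [map_mul, ← hUφ, hr, U.inv_mul, map_one]

/-- Membership of the g-Drazin inverse in the double commutant makes g-Drazin invertibility
descend along embeddings whose range is a commutant. -/
theorem HasGDrazin.of_map_of_range_eq_commutant {R S : Type*} [Ring R] [Algebra ℂ R]
    [NormedRing S] [NormedAlgebra ℂ S] [CompleteSpace S] (φ : R →ₐ[ℂ] S)
    (hφ : Function.Injective φ) {T : Set S}
    (hT : ∀ z, (∃ r, φ r = z) ↔ ∀ y ∈ T, Commute y z) {u : R} (hu : HasGDrazin (φ u)) :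
    HasGDrazin u := by
  obtain ⟨d, hc, hd, hq⟩ := hu
  obtain ⟨d, rfl⟩ := (hT d).2 fun y hy =>
    commute_gDrazin_of_commute hc hd hq ((hT _).1 ⟨u, rfl⟩ y hy)
  refine ⟨d, hφ (by simpa using hc), hφ (by simpa using hd), ?_⟩
  exact Quasinilpotent.of_map_of_range_eq_commutant φ hφ hT (by simpa using hq)

attribute [local instance] Matrix.linftyOpNormedRing Matrix.linftyOpNormedAlgebra

theorem HasGDrazin.matrix_of_map_of_range_eq_commutant {R S : Type*} [Ring R] [Algebra ℂ R]
    [NormedRing S] [NormedAlgebra ℂ S] [CompleteSpace S] (φ : R →ₐ[ℂ] S)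
    (hφ : Function.Injective φ) {T : Set S}
    (hT : ∀ z, (∃ r, φ r = z) ↔ ∀ y ∈ T, Commute y z) {N : Matrix (Fin 2) (Fin 2) R}
    (hN : HasGDrazin (φ.mapMatrix N)) : HasGDrazin N := by
  have : @CompleteSpace (Matrix (Fin 2) (Fin 2) S) PseudoMetricSpace.toUniformSpace :=
    inferInstanceAs (CompleteSpace (Fin 2 → Fin 2 → S))
  refine HasGDrazin.of_map_of_range_eq_commutant (S := Matrix (Fin 2) (Fin 2) S) φ.mapMatrix
    (Matrix.map_injective hφ) (T := Matrix.scalar (Fin 2) '' T) (fun Z => ?_) hN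
  have hcomm : ∀ y, Commute (Matrix.scalar (Fin 2) y) Z ↔ ∀ i j, Commute y (Z i j) := by
    intro y
    simp [commute_iff_eq, ← Matrix.ext_iff]
  constructor
  · rintro ⟨X, rfl⟩ _ ⟨y, hy, rfl⟩
    exact (hcomm y).2 fun i j => (hT _).1 ⟨X i j, rfl⟩ y hy
  · intro h
    choose X hX using fun i j => (hT (Z i j)).2 fun y hy =>
      (hcomm y).1 (h _ ⟨y, hy, rfl⟩) i j
    exact ⟨Matrix.of X, Matrix.ext hX⟩

end Transfer

theorem hasGDrazin_companion_iff {A B : Type*} [NormedRing A] [NormedAlgebra ℂ A]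
    [CompleteSpace A] [NormedCommRing B] [NormedAlgebra ℂ B] [CompleteSpace B] (φ : B →ₐ[ℂ] A)
    (hφ : Function.Injective φ) {a d w : A}
    (hrange : ∀ z, (∃ r, φ r = z) ↔ ∀ y ∈ Set.centralizer {a, w}, Commute y z)
    (hc : a * d = d * a) (hd : d = d * a * d) (hq : Quasinilpotent (a - a ^ 2 * d))
    (hw : (1 - a * d) * w = 0) :
    HasGDrazin (!![a, w; 1, 0] : Matrix (Fin 2) (Fin 2) A) ↔ HasGDrazin w := by
  have hya : ∀ y ∈ Set.centralizer {a, w}, Commute y a := fun y hy =>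
    (Set.mem_centralizer_iff.1 hy a (by simp)).symm
  have hyw : ∀ y ∈ Set.centralizer {a, w}, Commute y w := fun y hy =>
    (Set.mem_centralizer_iff.1 hy w (by simp)).symm
  obtain ⟨d, rfl⟩ := (hrange d).2 fun y hy => commute_gDrazin_of_commute hc hd hq (hya y hy)
  obtain ⟨a, rfl⟩ := (hrange a).2 hya
  obtain ⟨w, rfl⟩ := (hrange w).2 hyw
  have hmat : (!![φ a, φ w; 1, 0] : Matrix (Fin 2) (Fin 2) A) =
      φ.mapMatrix !![a, w; 1, 0] := by
    ext i j
    fin_cases i <;> fin_cases j <;> simp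
  rw [hmat]
  constructor
  · intro h
    have hdet := (HasGDrazin.matrix_of_map_of_range_eq_commutant φ hφ hrange h).det_fin_two.neg
    simpa [Matrix.det_fin_two_of] using hdet.map φ
  · intro h
    refine (hasGDrazin_companion (d := d) (hφ (by simpa using hd)) ?_ (hφ (by simpa using hw))
      (HasGDrazin.of_map_of_range_eq_commutant φ hφ hrange h)).map φ.mapMatrix
    exact Quasinilpotent.of_map_of_range_eq_commutant φ hφ hrange (by simpa using hq)

theorem hasGDrazin_fin_two_iff_companion {R : Type*} [Ring R] [Algebra ℂ R] (a b c : R) :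
    HasGDrazin (!![a, b; c, 0] : Matrix (Fin 2) (Fin 2) R) ↔
      HasGDrazin (!![a, b * c; 1, 0] : Matrix (Fin 2) (Fin 2) R) := by
  have h₁ : (!![a, b; c, 0] : Matrix (Fin 2) (Fin 2) R) = !![1, 0; 0, c] * !![a, b; 1, 0] := by
    simp
  have h₂ : (!![a, b * c; 1, 0] : Matrix (Fin 2) (Fin 2) R) =
      !![a, b; 1, 0] * !![1, 0; 0, c] := by
    simp
  rw [h₁, h₂]
  exact ⟨HasGDrazin.mul_comm, HasGDrazin.mul_comm⟩

theorem stmt17 {A : Type*} [NormedRing A] [NormedAlgebra ℂ A] [CompleteSpace A]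
    (a b c ad : A) (h1 : a * ad = ad * a) (h2 : ad = ad * a * ad)
    (h3 : Quasinilpotent (a - a ^ 2 * ad))
    (hbc : (1 - a * ad) * (b * c) = 0) (hcm : a * (b * c) = (b * c) * a) :
    HasGDrazin (!![a, b; c, 0] : Matrix (Fin 2) (Fin 2) A) ↔ HasGDrazin (b * c) := by
  rw [hasGDrazin_fin_two_iff_companion]
  let T : Set A := Set.centralizer {a, b * c}
  let B : Subalgebra ℂ A := Subalgebra.centralizer ℂ T
  have hpair : ∀ x ∈ ({a, b * c} : Set A), ∀ y ∈ ({a, b * c} : Set A), x * y = y * x := by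
    rintro x (rfl | rfl) y (rfl | rfl) <;> first | rfl | exact hcm | exact hcm.symm
  have hBT : ∀ z ∈ B, z ∈ T := fun z hz =>
    Set.centralizer_subset (fun x hx => Set.mem_centralizer_iff.2 fun y hy => hpair y hy x hx) hz
  let : NormedCommRing B :=
    { (inferInstance : NormedRing B) with
      mul_comm := fun x y => Subtype.ext (y.2 x (hBT x x.2)) }
  have : CompleteSpace B := (Set.isClosed_centralizer T).completeSpace_coe
  refine hasGDrazin_companion_iff B.val Subtype.val_injective (fun z => ⟨?_, fun hz => ?_⟩)
    h1 h2 h3 hbc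
  · rintro ⟨r, rfl⟩ y hy
    exact r.2 y hy
  · exact ⟨⟨z, hz⟩, rfl⟩
end
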